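/- Let d ≥ 1 be an integer and let ψ : ℤ^d → ℝ be a nonnegative function. Suppose there are constants c ∈ (0,1], D > 0 and γ ≥ 0 such that: (i) every nonzero value of ψ lies in some interval [cj, j/c] with j a positive integer, i.e. for every k ∈ ℤ^d with ψ(k) > 0 there is an integer j ≥ 1 with cj ≤ ψ(k) ≤ j/c; and (ii) for every integer j ≥ 1 the set {k ∈ ℤ^d : cj ≤ ψ(k) ≤ j/c} is finite with cardinality at most D·j^γ. Then there exists a constant C > 0, depending only on c, D and γ, such that for every t > 0 the family (e^{−tψ(k)})_{k∈ℤ^d, ψ(k)>0} is summable and Σ_{k∈ℤ^d, ψ(k)>0} e^{−tψ(k)} ≤ C · t^{−(γ+1)}. -/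

import Mathlib

/-!
If `S j` has at most `D * j ^ γ` points and `ψ ≥ c * j` on `S j`, then the points of `⋃ j, S j`
contribute at most `D * ∑ j, j ^ γ * exp (-(t * c * j))` to the heat trace. Since `x / 2 ≤ j ≤ x`
for `x ∈ (j, j + 1]`, up to the factor `2 ^ |γ|` each term is bounded by the integral of
`x ^ γ * exp (-(t * c / 2 * x))` over that interval, and the integral over `(0, ∞)` is
`Γ (γ + 1) * (2 / (t * c)) ^ (γ + 1)`, whose power of `t` is the required one.
-/

open MeasureTheory Set

open scoped ENNReal

section GammaIntegral

variable {a r γ s x y : ℝ}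

lemma rpow_le_two_rpow_abs_mul_rpow (hy : 0 < y) (hyx : y ≤ x) (hxy : x ≤ 2 * y) :
    y ^ γ ≤ 2 ^ |γ| * x ^ γ := by
  have hx : 0 < x := hy.trans_le hyx
  rcases le_total 0 γ with hγ | hγ
  · calc y ^ γ ≤ x ^ γ := Real.rpow_le_rpow hy.le hyx hγ
      _ ≤ 2 ^ |γ| * x ^ γ :=
        le_mul_of_one_le_left (by positivity) (Real.one_le_rpow one_le_two (abs_nonneg γ))
  · calc y ^ γ ≤ (2⁻¹ * x) ^ γ :=
          Real.rpow_le_rpow_of_nonpos (by positivity) (by linarith) hγ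
      _ = 2 ^ |γ| * x ^ γ := by
        rw [Real.mul_rpow (by positivity) hx.le, abs_of_nonpos hγ, Real.inv_rpow zero_le_two,
          Real.rpow_neg zero_le_two]

lemma lintegral_rpow_mul_exp_neg_mul_Ioi (ha : 0 < a) (hr : 0 < r) :
    ∫⁻ x in Ioi 0, ENNReal.ofReal (x ^ (a - 1) * Real.exp (-(r * x))) =
      ENNReal.ofReal ((1 / r) ^ a * Real.Gamma a) := by
  have hint : IntegrableOn (fun x ↦ x ^ (a - 1) * Real.exp (-(r * x))) (Ioi 0) := by
    simpa only [Real.rpow_one, neg_mul] using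
      integrableOn_rpow_mul_exp_neg_mul_rpow (s := a - 1) (by linarith) one_pos hr
  have hnonneg : ∀ᵐ x ∂volume.restrict (Ioi 0), 0 ≤ x ^ (a - 1) * Real.exp (-(r * x)) :=
    ae_restrict_of_forall_mem measurableSet_Ioi fun x (hx : 0 < x) ↦ by positivity
  rw [← ofReal_integral_eq_lintegral_ofReal hint hnonneg,
    Real.integral_rpow_mul_exp_neg_mul_Ioi ha hr]

lemma tsum_pnat_le_lintegral_Ioi {f : ℕ+ → ℝ≥0∞} {g : ℝ → ℝ≥0∞}
    (hfg : ∀ j : ℕ+, ∀ x ∈ Ioc (j : ℝ) (j + 1), f j ≤ g x) :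
    ∑' j, f j ≤ ∫⁻ x in Ioi 1, g x := by
  have hdisj : Pairwise (Function.onFun Disjoint fun j : ℕ+ ↦ Ioc (j : ℝ) (j + 1)) := by
    intro i j hij
    have hij' : (i : ℤ) ≠ j := mod_cast hij
    simpa [Function.onFun] using pairwise_disjoint_Ioc_intCast ℝ hij'
  calc ∑' j, f j
      = ∑' j : ℕ+, ∫⁻ _ in Ioc (j : ℝ) (j + 1), f j := by simp
    _ ≤ ∑' j : ℕ+, ∫⁻ x in Ioc (j : ℝ) (j + 1), g x :=
      ENNReal.tsum_le_tsum fun j ↦ setLIntegral_mono' measurableSet_Ioc (hfg j)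
    _ = ∫⁻ x in ⋃ j : ℕ+, Ioc (j : ℝ) (j + 1), g x :=
      (lintegral_iUnion (fun _ ↦ measurableSet_Ioc) hdisj g).symm
    _ ≤ ∫⁻ x in Ioi 1, g x := by
      refine lintegral_mono_set (iUnion_subset fun j x hx ↦ ?_)
      exact (Nat.one_le_cast.mpr j.pos).trans_lt hx.1

lemma tsum_pnat_rpow_mul_exp_neg_mul_le (hγ : -1 < γ) (hs : 0 < s) :
    ∑' j : ℕ+, ENNReal.ofReal ((j : ℝ) ^ γ * Real.exp (-(s * j))) ≤
      ENNReal.ofReal (2 ^ |γ| * ((2 / s) ^ (γ + 1) * Real.Gamma (γ + 1))) := by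
  have hterm (j : ℕ+) (x : ℝ) (hx : x ∈ Ioc (j : ℝ) (j + 1)) :
      (j : ℝ) ^ γ * Real.exp (-(s * j)) ≤ 2 ^ |γ| * (x ^ γ * Real.exp (-(s / 2 * x))) := by
    have hj : 1 ≤ (j : ℝ) := Nat.one_le_cast.mpr j.pos
    have hx0 : 0 < x := by linarith [hx.1]
    have hx_le : x ≤ 2 * j := by linarith [hx.2]
    have hexp : s / 2 * x ≤ s * j := by nlinarith
    rw [← mul_assoc]
    gcongr
    exact rpow_le_two_rpow_abs_mul_rpow (by positivity) hx.1.le hx_le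
  calc ∑' j : ℕ+, ENNReal.ofReal ((j : ℝ) ^ γ * Real.exp (-(s * j)))
      ≤ ∫⁻ x in Ioi 1, ENNReal.ofReal (2 ^ |γ| * (x ^ γ * Real.exp (-(s / 2 * x)))) :=
        tsum_pnat_le_lintegral_Ioi fun j x hx ↦ ENNReal.ofReal_le_ofReal (hterm j x hx)
    _ ≤ ∫⁻ x in Ioi 0, ENNReal.ofReal (2 ^ |γ| * (x ^ γ * Real.exp (-(s / 2 * x)))) :=
        lintegral_mono_set (Ioi_subset_Ioi zero_le_one)
    _ = ENNReal.ofReal (2 ^ |γ|) *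
          ∫⁻ x in Ioi 0, ENNReal.ofReal (x ^ (γ + 1 - 1) * Real.exp (-(s / 2 * x))) := by
        simp only [ENNReal.ofReal_mul (Real.rpow_nonneg zero_le_two |γ|), add_sub_cancel_right]
        exact lintegral_const_mul' _ _ ENNReal.ofReal_ne_top
    _ = ENNReal.ofReal (2 ^ |γ| * ((2 / s) ^ (γ + 1) * Real.Gamma (γ + 1))) := by
        rw [lintegral_rpow_mul_exp_neg_mul_Ioi (by linarith) (half_pos hs), one_div_div,
          ← ENNReal.ofReal_mul (by positivity)]

end GammaIntegral

lemma tsum_coe_le_tsum_ncard_mul {ι κ : Type*} {A : Set ι} {S : κ → Set ι} {f : ι → ℝ≥0∞}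
    {a : κ → ℝ≥0∞} (hcov : A ⊆ ⋃ j, S j) (hfin : ∀ j, (S j).Finite)
    (hf : ∀ j, ∀ k ∈ S j, f k ≤ a j) : ∑' k : A, f k ≤ ∑' j, (S j).ncard * a j :=
  calc ∑' k : A, f k
      ≤ ∑' k : ⋃ j, S j, f k := ENNReal.tsum_mono_subtype f hcov
    _ ≤ ∑' j, ∑' k : S j, f k := ENNReal.tsum_iUnion_le_tsum f S
    _ ≤ ∑' j, ∑' _ : S j, a j :=
      ENNReal.tsum_le_tsum fun j ↦ ENNReal.tsum_le_tsum fun k ↦ hf j k k.2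
    _ = ∑' j, (S j).ncard * a j := by
      simp only [ENNReal.tsum_set_const, ← (hfin _).cast_ncard_eq, ENat.toENNReal_coe]

lemma summable_and_tsum_le_of_tsum_ofReal_le {ι : Type*} {f : ι → ℝ} (hf : ∀ k, 0 ≤ f k) {B : ℝ}
    (hB : 0 ≤ B) (h : ∑' k, ENNReal.ofReal (f k) ≤ ENNReal.ofReal B) :
    Summable f ∧ ∑' k, f k ≤ B := by
  have hsum : Summable f := by
    simpa only [ENNReal.toReal_ofReal (hf _)] using
      ENNReal.summable_toReal (h.trans_lt ENNReal.ofReal_lt_top).ne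
  refine ⟨hsum, ?_⟩
  rwa [← ENNReal.ofReal_tsum_of_nonneg hf hsum, ENNReal.ofReal_le_ofReal_iff hB] at h

section HeatTrace

variable {ι : Type*} {ψ : ι → ℝ} {c D γ t : ℝ} {A : Set ι} {S : ℕ+ → Set ι}

lemma tsum_ofReal_exp_neg_mul_le (ht : 0 ≤ t) (hcov : A ⊆ ⋃ j, S j)
    (hψ : ∀ j, ∀ k ∈ S j, c * j ≤ ψ k)
    (hcard : ∀ j, (S j).Finite ∧ ((S j).ncard : ℝ) ≤ D * (j : ℝ) ^ γ) :
    ∑' k : A, ENNReal.ofReal (Real.exp (-(t * ψ k))) ≤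
      ENNReal.ofReal D *
        ∑' j : ℕ+, ENNReal.ofReal ((j : ℝ) ^ γ * Real.exp (-(t * c * j))) := by
  have hexp (j : ℕ+) (k : ι) (hk : k ∈ S j) :
      Real.exp (-(t * ψ k)) ≤ Real.exp (-(t * c * j)) := by
    rw [mul_assoc]
    gcongr
    exact hψ j k hk
  have hlevel (j : ℕ+) : (S j).ncard * ENNReal.ofReal (Real.exp (-(t * c * j))) ≤
      ENNReal.ofReal D * ENNReal.ofReal ((j : ℝ) ^ γ * Real.exp (-(t * c * j))) := by
    rw [← ENNReal.ofReal_natCast, ← ENNReal.ofReal_mul (Nat.cast_nonneg _),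
      ← ENNReal.ofReal_mul' (by positivity), ← mul_assoc]
    gcongr
    exact (hcard j).2
  calc ∑' k : A, ENNReal.ofReal (Real.exp (-(t * ψ k)))
      ≤ ∑' j : ℕ+, (S j).ncard * ENNReal.ofReal (Real.exp (-(t * c * j))) :=
        tsum_coe_le_tsum_ncard_mul (f := fun k ↦ ENNReal.ofReal (Real.exp (-(t * ψ k)))) hcov
          (fun j ↦ (hcard j).1) fun j k hk ↦ ENNReal.ofReal_le_ofReal (hexp j k hk)
    _ ≤ _ := (ENNReal.tsum_le_tsum hlevel).trans_eq ENNReal.tsum_mul_left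

theorem stmt_6_general (hc : 0 < c) (hγ : -1 < γ) (ht : 0 < t) (hcov : A ⊆ ⋃ j, S j)
    (hψ : ∀ j, ∀ k ∈ S j, c * j ≤ ψ k)
    (hcard : ∀ j, (S j).Finite ∧ ((S j).ncard : ℝ) ≤ D * (j : ℝ) ^ γ) :
    Summable (fun k : A ↦ Real.exp (-(t * ψ k))) ∧
      ∑' k : A, Real.exp (-(t * ψ k)) ≤
        D * (2 ^ |γ| * ((2 / c) ^ (γ + 1) * Real.Gamma (γ + 1))) * t ^ (-(γ + 1)) := by
  have hγ' : 0 < γ + 1 := by linarith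
  have hD : 0 ≤ D := by simpa using (Nat.cast_nonneg _).trans (hcard 1).2
  have hscale : (2 / (t * c)) ^ (γ + 1) = (2 / c) ^ (γ + 1) * t ^ (-(γ + 1)) := by
    rw [Real.rpow_neg ht.le, ← Real.inv_rpow ht.le, ← Real.mul_rpow (by positivity) (by positivity)]
    congr 1
    field_simp
  refine summable_and_tsum_le_of_tsum_ofReal_le (fun _ ↦ Real.exp_nonneg _) (by positivity) ?_
  calc ∑' k : A, ENNReal.ofReal (Real.exp (-(t * ψ k)))
      ≤ ENNReal.ofReal D *
          ∑' j : ℕ+, ENNReal.ofReal ((j : ℝ) ^ γ * Real.exp (-(t * c * j))) :=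
        tsum_ofReal_exp_neg_mul_le ht.le hcov hψ hcard
    _ ≤ ENNReal.ofReal D *
          ENNReal.ofReal (2 ^ |γ| * ((2 / (t * c)) ^ (γ + 1) * Real.Gamma (γ + 1))) := by
        gcongr
        exact tsum_pnat_rpow_mul_exp_neg_mul_le hγ (mul_pos ht hc)
    _ = _ := by
        rw [← ENNReal.ofReal_mul hD, hscale]
        ring_nf

end HeatTrace

/-- Let `ψ : ℤ^d → ℝ` be nonnegative, and suppose there are constants `c ∈ (0,1]`, `D > 0`,
`γ ≥ 0` such that every nonzero value of `ψ` lies in some interval `[cj, j/c]` with `j ≥ 1` an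
integer, and for every integer `j ≥ 1` the set `{k : cj ≤ ψ(k) ≤ j/c}` is finite of cardinality
at most `D·j^γ`.  Then there is a constant `C > 0`, depending only on `c`, `D` and `γ`, such
that for every `t > 0` the family `(e^{−tψ(k)})_{ψ(k)>0}` is summable with sum at most
`C · t^{−(γ+1)}`. -/
theorem stmt_6 (c D γ : ℝ) (hc0 : 0 < c) (hc1 : c ≤ 1) (hD : 0 < D) (hγ : 0 ≤ γ) :
    ∃ C : ℝ, 0 < C ∧
      ∀ (d : ℕ), 1 ≤ d → ∀ ψ : (Fin d → ℤ) → ℝ,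
        (∀ k, 0 ≤ ψ k) →
        (∀ k, 0 < ψ k → ∃ j : ℕ, 1 ≤ j ∧ c * (j : ℝ) ≤ ψ k ∧ ψ k ≤ (j : ℝ) / c) →
        (∀ j : ℕ, 1 ≤ j →
          {k : Fin d → ℤ | c * (j : ℝ) ≤ ψ k ∧ ψ k ≤ (j : ℝ) / c}.Finite ∧
            (({k : Fin d → ℤ | c * (j : ℝ) ≤ ψ k ∧ ψ k ≤ (j : ℝ) / c}.ncard : ℝ) ≤
              D * (j : ℝ) ^ γ)) →
        ∀ t : ℝ, 0 < t →
          Summable (fun k : {k : Fin d → ℤ // 0 < ψ k} => Real.exp (-(t * ψ k))) ∧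
          (∑' k : {k : Fin d → ℤ // 0 < ψ k}, Real.exp (-(t * ψ k))) ≤ C * t ^ (-(γ + 1)) := by
  exact ⟨D * (2 ^ |γ| * ((2 / c) ^ (γ + 1) * Real.Gamma (γ + 1))), by positivity,
    fun d _ ψ _ hcov hcard t ht ↦ stmt_6_general (A := {k | 0 < ψ k})
      (S := fun j : ℕ+ ↦ {k | c * (j : ℝ) ≤ ψ k ∧ ψ k ≤ (j : ℝ) / c})
      hc0 (by linarith) ht
      (fun k hk ↦ let ⟨j, hj, hkj⟩ := hcov k hk; mem_iUnion.mpr ⟨⟨j, hj⟩, hkj⟩)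
      (fun _ _ hk ↦ hk.1) fun j ↦ hcard j j.pos⟩
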